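/- Let γ : [a,b] → ℝ³ be a curve with constant speed C > 0 and |γ(t)| ≥ 1 for all t. Then the horizon of γ satisfies H(γ) = C·∫_a^b ∫_0^{2π} (1/|γ(t)|²)·| √(|γ(t)|² − 1)·sin(α(t))·cos θ + cos(α(t)) | dθ dt; equivalently, the efficiency satisfies E(γ) = (1/(b−a))·∫_a^b ∫_0^{2π} (1/|γ(t)|²)·| √(|γ(t)|² − 1)·sin(α(t))·cos θ + cos(α(t)) | dθ dt. -/

import Mathlib

/-! Let `x` be a point with `‖x‖ > 1`. The points of the unit sphere whose tangent plane contains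
`x` form the circle cut out by `⟪x, p⟫ = 1`; it lies in the plane orthogonal to `x` at distance
`‖x‖⁻¹` from the origin. As `x` runs along the curve, these circles sweep out the sphere, covering
`p` as often as the curve meets the tangent plane at `p`. Coning from the origin turns this sweep
into a map between subsets of `ℝ³`, so the horizon becomes the integral of a Jacobian by the area
formula with multiplicity. That Jacobian is determined by two identities: on the cone over the
circle of `x`, the radius is both the norm and the inner product with `x`. At the radius `r` and the
velocity `v` it equals `r ^ 2 * |⟪v, p⟫| / ‖x‖`, and expanding `⟪v, p⟫` along the circle gives the
angle integrand.

The frame that parametrises the circle is built from the cross product with a fixed vector, and two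
choices of that vector suffice. Parameters at which the curve touches the sphere contribute nothing
on either side: their cone is null, and the norm is minimal there, so the velocity is orthogonal to
the position. -/

open MeasureTheory Set Real
open scoped ENNReal NNReal RealInnerProductSpace

noncomputable section

abbrev E3 := EuclideanSpace ℝ (Fin 3)

/-- The horizon of a curve: the measure, counted with multiplicity, of the set of points
`p` of the unit sphere whose tangent plane `{x : ⟨x,p⟩ = 1}` meets the curve. -/
def horizon (a b : ℝ) (γ : ℝ → E3) : ℝ≥0∞ :=
  ∫⁻ p : Metric.sphere (0 : E3) 1,
    ({t ∈ Set.Ico a b | ⟪γ t, (p : E3)⟫ = 1}.encard : ℝ≥0∞)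
      ∂((volume : Measure E3).toSphere)

/-- The angle between the position vector `γ(t)` and the velocity `γ′(t)`. -/
def alpha (a b : ℝ) (γ : ℝ → E3) (t : ℝ) : ℝ :=
  InnerProductGeometry.angle (γ t) (derivWithin γ (Set.Icc a b) t)

section AreaFormula

variable {α β : Type*} {f : α → β} {s t : Set α} {y : β}

/-- The Banach indicatrix of `f` on `s`: the number of preimages of `y` in `s`, possibly infinite.
It is the multiplicity with which `f` covers `y` in the area formula. -/
def indicatrix (f : α → β) (s : Set α) (y : β) : ℝ≥0∞ :=
  (s ∩ f ⁻¹' {y}).encard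

lemma encard_iUnion_eq_tsum {ι : Type*} [Countable ι] {t : ι → Set α}
    (ht : Pairwise (Function.onFun Disjoint t)) :
    ((⋃ i, t i).encard : ℝ≥0∞) = ∑' i, ((t i).encard : ℝ≥0∞) := by
  let _ : MeasurableSpace α := ⊤
  simp_rw [← Measure.count_apply (MeasurableSpace.measurableSet_top)]
  exact measure_iUnion ht fun _ => trivial

lemma indicatrix_iUnion {ι : Type*} [Countable ι] {t : ι → Set α}
    (ht : Pairwise (Function.onFun Disjoint t)) :
    indicatrix f (⋃ i, t i) y = ∑' i, indicatrix f (t i) y := by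
  simp_rw [indicatrix, iUnion_inter]
  exact encard_iUnion_eq_tsum fun i j hij => (ht hij).mono inter_subset_left inter_subset_left

lemma indicatrix_eq_indicator_of_injOn (hf : InjOn f s) :
    indicatrix f s = (f '' s).indicator 1 := by
  ext y
  by_cases hy : y ∈ f '' s
  · obtain ⟨x, hx, rfl⟩ := hy
    have hfiber : s ∩ f ⁻¹' {f x} = {x} :=
      Subset.antisymm (fun z hz => hf hz.1 hx hz.2) (singleton_subset_iff.2 ⟨hx, rfl⟩)
    simp [indicatrix, hfiber, mem_image_of_mem f hx]
  · have hfiber : s ∩ f ⁻¹' {y} = ∅ :=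
      eq_empty_of_forall_notMem fun z hz => hy ⟨z, hz.1, hz.2⟩
    simp only [indicatrix, hfiber, encard_empty, ENat.toENNReal_zero, indicator_of_notMem hy]

lemma indicatrix_eq_of_notMem_image_diff (hst : s ⊆ t) (hy : y ∉ f '' (t \ s)) :
    indicatrix f t y = indicatrix f s y := by
  have hfiber : t ∩ f ⁻¹' {y} = s ∩ f ⁻¹' {y} :=
    Subset.antisymm (fun x hx => ⟨by_contra fun hxs => hy ⟨x, ⟨hx.1, hxs⟩, hx.2⟩, hx.2⟩)
      (inter_subset_inter_left _ hst)
  rw [indicatrix, indicatrix, hfiber]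

variable {E : Type*} [NormedAddCommGroup E] [NormedSpace ℝ E] [FiniteDimensional ℝ E]

lemma exists_injOn_of_approximatesLinearOn {A : E →L[ℝ] E} (hA : A.det ≠ 0) :
    ∃ δ : ℝ≥0, δ ≠ 0 ∧ ∀ (f : E → E) (s : Set E), ApproximatesLinearOn f A s δ → InjOn f s := by
  rcases subsingleton_or_nontrivial E with _ | _
  · exact ⟨1, one_ne_zero, fun f s _ => injOn_of_subsingleton f s⟩
  let e := A.toContinuousLinearEquivOfDetNeZero hA
  have he : (e : E →L[ℝ] E) = A := by ext; simp [e]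
  have hpos : 0 < ‖(e.symm : E →L[ℝ] E)‖₊ := e.nnnorm_symm_pos
  refine ⟨‖(e.symm : E →L[ℝ] E)‖₊⁻¹ / 2, by positivity, fun f s hf => ?_⟩
  rw [← he] at hf
  exact hf.injOn (Or.inr (NNReal.half_lt_self (by positivity)))

variable [MeasurableSpace E] [BorelSpace E] (μ : Measure E) [μ.IsAddHaarMeasure]
  {f : E → E} {f' : E → E →L[ℝ] E} {s : Set E}

lemma area_formula_iUnion_of_injOn {t : ℕ → Set E} (ht : ∀ n, MeasurableSet (t n))
    (hdisj : Pairwise (Function.onFun Disjoint t)) (hinj : ∀ n, InjOn f (t n))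
    (hf : ∀ n, ∀ x ∈ t n, HasFDerivWithinAt f (f' x) (t n) x) :
    Measurable (indicatrix f (⋃ n, t n)) ∧
      ∫⁻ y, indicatrix f (⋃ n, t n) y ∂μ
        = ∫⁻ x in ⋃ n, t n, ENNReal.ofReal |(f' x).det| ∂μ := by
  have himage : ∀ n, MeasurableSet (f '' t n) := fun n =>
    measurable_image_of_fderivWithin (ht n) (hf n) (hinj n)
  have hpiece : ∀ n, Measurable (indicatrix f (t n)) := fun n => by
    rw [indicatrix_eq_indicator_of_injOn (hinj n)]
    exact measurable_one.indicator (himage n)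
  have hsum : indicatrix f (⋃ n, t n) = fun y => ∑' n, indicatrix f (t n) y :=
    funext fun y => indicatrix_iUnion hdisj
  refine ⟨hsum ▸ Measurable.tsum hpiece, ?_⟩
  rw [hsum, lintegral_tsum fun n => (hpiece n).aemeasurable, lintegral_iUnion ht hdisj]
  refine tsum_congr fun n => ?_
  rw [indicatrix_eq_indicator_of_injOn (hinj n), lintegral_indicator_one (himage n),
    lintegral_abs_det_fderiv_eq_addHaar_image μ (ht n) (hf n) (hinj n)]

lemma area_formula_of_det_ne_zero (hs : MeasurableSet s)
    (hf : ∀ x ∈ s, HasFDerivWithinAt f (f' x) s x) (hdet : ∀ x ∈ s, (f' x).det ≠ 0) :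
    Measurable (indicatrix f s) ∧
      ∫⁻ y, indicatrix f s y ∂μ = ∫⁻ x in s, ENNReal.ofReal |(f' x).det| ∂μ := by
  have hδ : ∀ A : E →L[ℝ] E, ∃ δ : ℝ≥0, δ ≠ 0 ∧
      (A.det ≠ 0 → ∀ (f : E → E) (s : Set E), ApproximatesLinearOn f A s δ → InjOn f s) := by
    intro A
    by_cases hA : A.det = 0
    · exact ⟨1, one_ne_zero, fun hA' => absurd hA hA'⟩
    · exact (exists_injOn_of_approximatesLinearOn hA).imp fun δ hδ => ⟨hδ.1, fun _ => hδ.2⟩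
  choose δ hδ0 hδinj using hδ
  obtain ⟨t, A, hdisj, ht, hcover, happrox, hA⟩ :=
    exists_partition_approximatesLinearOn_of_hasFDerivWithinAt f s f' hf δ hδ0
  have hinj : ∀ n, InjOn f (s ∩ t n) := by
    intro n
    rcases s.eq_empty_or_nonempty with rfl | hne
    · simp
    obtain ⟨x, hx, hAx⟩ := hA hne n
    exact hδinj (A n) (hAx ▸ hdet x hx) f _ (happrox n)
  have hs_eq : ⋃ n, s ∩ t n = s := by rw [← inter_iUnion, inter_eq_left.2 hcover]
  have := area_formula_iUnion_of_injOn μ (fun n => hs.inter (ht n))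
    (fun i j hij => (hdisj hij).mono inter_subset_right inter_subset_right) hinj
    (fun n x hx => (hf x hx.1).mono inter_subset_left)
  rwa [hs_eq] at this

lemma exists_measurable_subset_det_ne_zero (hs : MeasurableSet s)
    (hf : ∀ x ∈ s, HasFDerivWithinAt f (f' x) s x) :
    ∃ r ⊆ s, MeasurableSet r ∧ (∀ x ∈ r, (f' x).det ≠ 0) ∧
      (∀ᵐ x ∂μ, x ∈ s \ r → (f' x).det = 0) ∧ μ (f '' (s \ r)) = 0 := by
  have hdet : AEMeasurable (fun x => (f' x).det) (μ.restrict s) :=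
    ContinuousLinearMap.continuous_det.measurable.comp_aemeasurable
      (aemeasurable_fderivWithin μ hs hf)
  have hregular : NullMeasurableSet ({x | (f' x).det ≠ 0} ∩ s) μ :=
    (nullMeasurableSet_restrict hs.nullMeasurableSet).1
      (hdet.nullMeasurable (measurableSet_singleton (0 : ℝ)).compl)
  obtain ⟨r, hr_sub, hr, hr_ae⟩ := hregular.exists_measurable_subset_ae_eq
  have hnull : μ (({x | (f' x).det ≠ 0} ∩ s) \ r) = 0 := (ae_eq_set.1 hr_ae).2
  refine ⟨r, hr_sub.trans inter_subset_right, hr, fun x hx => (hr_sub hx).1, ?_, ?_⟩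
  · filter_upwards [measure_eq_zero_iff_ae_notMem.1 hnull] with x hx hxs
    exact by_contra fun h => hx ⟨⟨h, hxs.1⟩, hxs.2⟩
  · have hcover : s \ r ⊆ (({x | (f' x).det ≠ 0} ∩ s) \ r) ∪ (s ∩ {x | (f' x).det = 0}) :=
      fun x hx => or_iff_not_imp_right.2 fun h => ⟨⟨fun h0 => h ⟨hx.1, h0⟩, hx.1⟩, hx.2⟩
    refine measure_mono_null (image_mono hcover) ?_
    rw [image_union]
    refine measure_union_null ?_ ?_
    · exact addHaar_image_eq_zero_of_differentiableOn_of_addHaar_eq_zero μ (fun x hx =>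
        ((hf x hx.1.2).mono (sdiff_subset.trans inter_subset_right)).differentiableWithinAt) hnull
    · exact addHaar_image_eq_zero_of_det_fderivWithin_eq_zero μ
        (fun x hx => (hf x hx.1).mono inter_subset_left) fun x hx => hx.2

theorem area_formula (hs : MeasurableSet s) (hf : ∀ x ∈ s, HasFDerivWithinAt f (f' x) s x) :
    AEMeasurable (indicatrix f s) μ ∧
      ∫⁻ y, indicatrix f s y ∂μ = ∫⁻ x in s, ENNReal.ofReal |(f' x).det| ∂μ := by
  obtain ⟨r, hrs, hr, hdet, hdet_zero, himage⟩ := exists_measurable_subset_det_ne_zero μ hs hf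
  obtain ⟨hmeas, hintegral⟩ :=
    area_formula_of_det_ne_zero μ hr (fun x hx => (hf x (hrs hx)).mono hrs) hdet
  have hae : indicatrix f s =ᵐ[μ] indicatrix f r := by
    filter_upwards [measure_eq_zero_iff_ae_notMem.1 himage] with y hy
    exact indicatrix_eq_of_notMem_image_diff hrs hy
  refine ⟨hmeas.aemeasurable.congr hae.symm, ?_⟩
  rw [lintegral_congr_ae hae, hintegral, ← lintegral_inter_add_sdiff _ s hr, inter_eq_right.2 hrs,
    setLIntegral_congr_fun_ae (g := fun _ => 0) (hs.diff hr), lintegral_zero, add_zero]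
  filter_upwards [hdet_zero] with x hx hxs
  rw [hx hxs, abs_zero, ENNReal.ofReal_zero]

end AreaFormula

section Polar

variable {E : Type*} [NormedAddCommGroup E] [NormedSpace ℝ E] [FiniteDimensional ℝ E]
  [MeasurableSpace E] [BorelSpace E] (μ : Measure E) [μ.IsAddHaarMeasure] {h : E → ℝ≥0∞}

lemma volumeIoiPow_sub_one_Iio_one {n : ℕ} (hn : 0 < n) :
    Measure.volumeIoiPow (n - 1) (Iio ⟨1, mem_Ioi.2 one_pos⟩) = (n : ℝ≥0∞)⁻¹ := by
  rw [Measure.volumeIoiPow_apply_Iio, one_pow, one_div, Nat.cast_sub hn, Nat.cast_one,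
    sub_add_cancel, ENNReal.ofReal_inv_of_pos (by exact_mod_cast hn), ENNReal.ofReal_natCast]

lemma lintegral_eq_lintegral_toSphere_prod [Nontrivial E] (hm : AEMeasurable h μ) :
    ∫⁻ x, h x ∂μ = ∫⁻ p : Metric.sphere (0 : E) 1, ∫⁻ r : Ioi (0 : ℝ), h (r.1 • p.1)
      ∂Measure.volumeIoiPow (Module.finrank ℝ E - 1) ∂μ.toSphere := by
  have hpres := μ.measurePreserving_homeomorphUnitSphereProd.symm
    (homeomorphUnitSphereProd E).toMeasurableEquiv
  have hm' : AEMeasurable (fun x : ({0}ᶜ : Set E) => h x) (μ.comap Subtype.val) :=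
    (aemeasurable_restrict_iff_comap_subtype (measurableSet_singleton (0 : E)).compl).1 hm.restrict
  calc ∫⁻ x, h x ∂μ
      = ∫⁻ x : ({0}ᶜ : Set E), h x ∂μ.comap Subtype.val := by
        rw [lintegral_subtype_comap (measurableSet_singleton _).compl, restrict_compl_singleton]
    _ = ∫⁻ z, h ((homeomorphUnitSphereProd E).symm z)
          ∂μ.toSphere.prod (Measure.volumeIoiPow (Module.finrank ℝ E - 1)) :=
        (hpres.lintegral_comp_emb (homeomorphUnitSphereProd E).symm.measurableEmbedding
          fun x : ({0}ᶜ : Set E) => h x).symm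
    _ = _ := by
        have hm_prod := hm'.comp_quasiMeasurePreserving hpres.quasiMeasurePreserving
        exact (lintegral_prod _ hm_prod).trans (by simp)

theorem lintegral_toSphere_eq_finrank_mul [Nontrivial E]
    (hh : ∀ r : ℝ, 0 < r → ∀ x, h (r • x) = h x)
    (hm : AEMeasurable h (μ.restrict (Metric.ball 0 1 \ {0}))) :
    ∫⁻ p : Metric.sphere (0 : E) 1, h p ∂μ.toSphere
      = Module.finrank ℝ E * ∫⁻ x in Metric.ball 0 1 \ {0}, h x ∂μ := by
  have hball : MeasurableSet (Metric.ball (0 : E) 1 \ {0}) :=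
    measurableSet_ball.diff (measurableSet_singleton 0)
  have hdim : (Module.finrank ℝ E : ℝ≥0∞) ≠ 0 := by
    exact_mod_cast (Module.finrank_pos (R := ℝ) (M := E)).ne'
  have hradial : ∀ p : Metric.sphere (0 : E) 1,
      ∫⁻ r : Ioi (0 : ℝ), (Metric.ball 0 1 \ {0}).indicator h (r.1 • p.1)
        ∂Measure.volumeIoiPow (Module.finrank ℝ E - 1) = h p * (Module.finrank ℝ E : ℝ≥0∞)⁻¹ := by
    intro p
    have hray : ∀ r : Ioi (0 : ℝ), (Metric.ball 0 1 \ {0}).indicator h (r.1 • p.1)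
        = (Iio (⟨1, mem_Ioi.2 one_pos⟩ : Ioi (0 : ℝ))).indicator (fun _ => h p) r := by
      intro r
      have hmem : r.1 • p.1 ∈ Metric.ball (0 : E) 1 \ {0} ↔
          r ∈ Iio (⟨1, mem_Ioi.2 one_pos⟩ : Ioi (0 : ℝ)) := by
        have hr : (0 : ℝ) < r := r.2
        have hp : p.1 ≠ 0 := ne_zero_of_mem_unit_sphere p
        simp [norm_smul, abs_of_pos hr, hr.ne', hp, ← Subtype.coe_lt_coe]
      by_cases hr : r ∈ Iio (⟨1, mem_Ioi.2 one_pos⟩ : Ioi (0 : ℝ))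
      · rw [indicator_of_mem hr, indicator_of_mem (hmem.2 hr), hh _ r.2]
      · rw [indicator_of_notMem hr, indicator_of_notMem (mt hmem.1 hr)]
    simp_rw [hray]
    rw [lintegral_indicator measurableSet_Iio, setLIntegral_const,
      volumeIoiPow_sub_one_Iio_one Module.finrank_pos]
  rw [← lintegral_indicator hball, lintegral_eq_lintegral_toSphere_prod μ
    ((aemeasurable_indicator_iff hball).2 hm)]
  simp_rw [hradial]
  rw [lintegral_mul_const' _ _ (by simpa using hdim), mul_comm, mul_assoc,
    ENNReal.inv_mul_cancel hdim (by simp), mul_one]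

end Polar

section NullImage

variable {E : Type*} [NormedAddCommGroup E] [NormedSpace ℝ E] [FiniteDimensional ℝ E]
  [MeasurableSpace E] [BorelSpace E] (μ : Measure E) [μ.IsAddHaarMeasure] {f : E → E} {s : Set E}

lemma addHaar_image_eq_zero_of_lipschitzOnWith {K : ℝ≥0} (hf : LipschitzOnWith K f s)
    (hs : μ s = 0) : μ (f '' s) = 0 := by
  have hs' : Measure.hausdorffMeasure (Module.finrank ℝ E) s = 0 :=
    Measure.absolutelyContinuous_isAddHaarMeasure _ μ hs
  have himage := hf.hausdorffMeasure_image_le (Nat.cast_nonneg (Module.finrank ℝ E))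
  rw [hs', mul_zero] at himage
  exact Measure.absolutelyContinuous_isAddHaarMeasure μ _ (nonpos_iff_eq_zero.1 himage)

lemma addHaar_image_eq_zero_of_locallyLipschitzOn (hf : LocallyLipschitzOn s f) (hs : μ s = 0) :
    μ (f '' s) = 0 := by
  choose! K U hU hL using fun x (hx : x ∈ s) => hf hx
  obtain ⟨t, hts, ht, hcover⟩ := TopologicalSpace.countable_cover_nhdsWithin hU
  have himage : f '' s ⊆ ⋃ x ∈ t, f '' (s ∩ U x) := by
    rw [← image_iUnion₂, ← inter_iUnion₂]
    exact image_mono (subset_inter Subset.rfl hcover)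
  refine measure_mono_null himage ((measure_biUnion_null_iff ht).2 fun x hx => ?_)
  exact addHaar_image_eq_zero_of_lipschitzOnWith μ ((hL x (hts hx)).mono inter_subset_right)
    (measure_mono_null inter_subset_left hs)

end NullImage

section Speed

section PseudoEMetricSpace

variable {X : Type*} [PseudoEMetricSpace X] {γ : ℝ → X} {K C : ℝ≥0} {a b : ℝ} {s : Set ℝ}

lemma exists_lipschitzWith_eqOn_Icc (hab : a ≤ b) (hγ : LipschitzOnWith K γ (Icc a b)) :
    ∃ g : ℝ → X, LipschitzWith K g ∧ EqOn γ g (Icc a b) ∧ range g ⊆ γ '' Icc a b := by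
  refine ⟨γ ∘ Subtype.val ∘ projIcc a b hab, ?_, fun t ht => ?_, ?_⟩
  · exact mul_one K ▸ hγ.to_restrict.comp (LipschitzWith.projIcc hab)
  · simp [projIcc_of_mem hab ht]
  · rintro _ ⟨t, rfl⟩
    exact mem_image_of_mem γ (projIcc a b hab t).2

lemma lipschitzOnWith_of_hasConstantSpeedOnWith (hγ : HasConstantSpeedOnWith γ s C) :
    LipschitzOnWith C γ s := by
  have hle : ∀ x ∈ s, ∀ y ∈ s, x ≤ y → edist (γ x) (γ y) ≤ C * edist x y := by
    intro x hx y hy hxy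
    calc edist (γ x) (γ y) ≤ eVariationOn γ (s ∩ Icc x y) :=
          eVariationOn.edist_le γ ⟨hx, left_mem_Icc.2 hxy⟩ ⟨hy, right_mem_Icc.2 hxy⟩
      _ = C * edist x y := by
          rw [hγ hx hy, ENNReal.ofReal_mul C.coe_nonneg, ENNReal.ofReal_coe_nnreal, edist_comm,
            edist_dist, Real.dist_eq, abs_of_nonneg (sub_nonneg.2 hxy)]
  intro x hx y hy
  rcases le_total x y with h | h
  · exact hle x hx y hy h
  · rw [edist_comm, edist_comm x y]
    exact hle y hy x hx h

lemma eVariationOn_le_of_edist_le {α Y : Type*} [LinearOrder α] [PseudoEMetricSpace Y]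
    {f : α → X} {g : α → Y} {s : Set α}
    (h : ∀ x ∈ s, ∀ y ∈ s, x ≤ y → edist (f x) (f y) ≤ edist (g x) (g y)) :
    eVariationOn f s ≤ eVariationOn g s := by
  refine iSup_mono fun p => Finset.sum_le_sum fun i _ => ?_
  rw [edist_comm (f _), edist_comm (g _)]
  exact h _ (p.2.2.2 i) _ (p.2.2.2 (i + 1)) (p.2.2.1 i.le_succ)

lemma eVariationOn_Icc_of_hasConstantSpeedOnWith
    (hγ : HasConstantSpeedOnWith γ (Icc a b) C) (hab : a ≤ b) :
    eVariationOn γ (Icc a b) = ENNReal.ofReal (C * (b - a)) := by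
  simpa using hγ (left_mem_Icc.2 hab) (right_mem_Icc.2 hab)

end PseudoEMetricSpace

variable {E : Type*} [NormedAddCommGroup E] [NormedSpace ℝ E] {γ g : ℝ → E} {K C : ℝ≥0} {a b t : ℝ}

lemma derivWithin_Icc_eq_deriv_of_eqOn (h : EqOn γ g (Icc a b)) (ht : t ∈ Ioo a b) :
    derivWithin γ (Icc a b) t = deriv g t := by
  have hnhds : Icc a b ∈ nhds t := Icc_mem_nhds ht.1 ht.2
  rw [derivWithin_of_mem_nhds hnhds]
  exact (h.eventuallyEq_of_mem hnhds).deriv_eq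

variable [FiniteDimensional ℝ E]

lemma intervalIntegrable_norm_deriv_of_lipschitzWith (hγ : LipschitzWith K γ) (s t : ℝ) :
    IntervalIntegrable (fun x => ‖deriv γ x‖) volume s t := by
  borelize E
  refine (intervalIntegrable_const (c := (K : ℝ))).mono_fun
    (measurable_deriv γ).norm.aestronglyMeasurable (Filter.Eventually.of_forall fun x => ?_)
  simpa using norm_deriv_le_of_lipschitz hγ

lemma norm_sub_le_integral_norm_deriv (hγ : LipschitzWith K γ) {s t : ℝ} (hst : s ≤ t) :
    ‖γ t - γ s‖ ≤ ∫ x in s..t, ‖deriv γ x‖ := by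
  obtain ⟨φ, hφ, hφγ⟩ := exists_dual_vector'' ℝ (γ t - γ s)
  have hac := ((φ.lipschitz.comp hγ).lipschitzOnWith
    (s := uIcc s t)).absolutelyContinuousOnInterval
  calc ‖γ t - γ s‖ = φ (γ t) - φ (γ s) := by rw [← map_sub, hφγ]; rfl
    _ = ∫ x in s..t, deriv (φ ∘ γ) x := hac.integral_deriv_eq_sub.symm
    _ ≤ ∫ x in s..t, ‖deriv γ x‖ := by
        refine intervalIntegral.integral_mono_ae hst hac.intervalIntegrable_deriv
          (intervalIntegrable_norm_deriv_of_lipschitzWith hγ s t) ?_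
        filter_upwards [hγ.ae_differentiableAt_real] with x hx
        rw [(φ.hasFDerivAt.comp_hasDerivAt x hx.hasDerivAt).deriv]
        exact (le_abs_self _).trans (φ.le_of_opNorm_le hφ _ |>.trans_eq (one_mul _))

lemma eVariationOn_Icc_le_integral_norm_deriv (hγ : LipschitzWith K γ) (hab : a ≤ b) :
    eVariationOn γ (Icc a b) ≤ ENNReal.ofReal (∫ x in a..b, ‖deriv γ x‖) := by
  have hint := intervalIntegrable_norm_deriv_of_lipschitzWith hγ
  set ℓ : ℝ → ℝ := fun t => ∫ x in a..t, ‖deriv γ x‖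
  have hℓ_sub : ∀ s t, ℓ t - ℓ s = ∫ x in s..t, ‖deriv γ x‖ := fun s t =>
    intervalIntegral.integral_interval_sub_left (hint _ _) (hint _ _)
  have hnorm_le : ∀ {s t}, s ≤ t → ‖γ t - γ s‖ ≤ ℓ t - ℓ s := fun {s t} hst =>
    hℓ_sub s t ▸ norm_sub_le_integral_norm_deriv hγ hst
  have hℓ_mono : Monotone ℓ := fun s t hst =>
    sub_nonneg.1 ((norm_nonneg _).trans (hnorm_le hst))
  calc eVariationOn γ (Icc a b) ≤ eVariationOn ℓ (Icc a b) := by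
        refine eVariationOn_le_of_edist_le fun x _ y _ hxy => ?_
        rw [edist_comm, edist_comm (ℓ x), edist_dist, edist_dist, dist_eq_norm, dist_eq_norm]
        exact ENNReal.ofReal_le_ofReal ((hnorm_le hxy).trans (Real.le_norm_self _))
    _ = ENNReal.ofReal (ℓ b - ℓ a) := by
        simpa using (hℓ_mono.monotoneOn (Icc a b)).eVariationOn_eq
          (left_mem_Icc.2 hab) (right_mem_Icc.2 hab)
    _ = ENNReal.ofReal (∫ x in a..b, ‖deriv γ x‖) := by rw [hℓ_sub]

theorem ae_norm_derivWithin_eq_of_hasConstantSpeedOnWith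
    (hγ : HasConstantSpeedOnWith γ (Icc a b) C) (hab : a ≤ b) :
    ∀ᵐ t ∂volume.restrict (Ioo a b), ‖derivWithin γ (Icc a b) t‖ = C := by
  obtain ⟨g, hg, hγg, -⟩ :=
    exists_lipschitzWith_eqOn_Icc hab (lipschitzOnWith_of_hasConstantSpeedOnWith hγ)
  have hint := intervalIntegrable_norm_deriv_of_lipschitzWith hg a b
  have hle : ∀ t, ‖deriv g t‖ ≤ C := fun t => norm_deriv_le_of_lipschitz hg
  have hlength : C * (b - a) ≤ ∫ t in a..b, ‖deriv g t‖ := by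
    rw [← ENNReal.ofReal_le_ofReal_iff
      (intervalIntegral.integral_nonneg hab fun _ _ => norm_nonneg _),
      ← eVariationOn_Icc_of_hasConstantSpeedOnWith hγ hab, eVariationOn.congr hγg]
    exact eVariationOn_Icc_le_integral_norm_deriv hg hab
  have hintegral : ∫ t in a..b, ‖deriv g t‖ = ∫ _ in a..b, (C : ℝ) := by
    refine le_antisymm (intervalIntegral.integral_mono hab hint intervalIntegrable_const hle) ?_
    rwa [intervalIntegral.integral_const, smul_eq_mul, mul_comm]
  have hae := (integral_eq_iff_of_ae_le hint.1 (intervalIntegrable_const (c := (C : ℝ))).1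
    (Filter.Eventually.of_forall hle)).1 <| by
      simpa [intervalIntegral.integral_of_le hab] using hintegral
  filter_upwards [ae_restrict_of_ae_restrict_of_subset Ioo_subset_Ioc_self hae,
    ae_restrict_mem measurableSet_Ioo] with t ht hmem
  rw [derivWithin_Icc_eq_deriv_of_eqOn hγg hmem, ht]

end Speed

section TangencyCircle

variable {E : Type*} [NormedAddCommGroup E] [InnerProductSpace ℝ E]

/-- The angle integrand of the horizon formula at a point `x` with velocity `v`. -/
def tangencyKernel (x v : E) (θ : ℝ) : ℝ :=
  (1 / ‖x‖ ^ 2) * |√(‖x‖ ^ 2 - 1) * sin (InnerProductGeometry.angle x v) * cos θ +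
    cos (InnerProductGeometry.angle x v)|

/-- The horizon swept out at the point `x`, per unit of length, in the direction `v`. -/
def tangencyDensity (x v : E) : ℝ :=
  ∫ θ in (0 : ℝ)..(2 * π), tangencyKernel x v θ

/-- The circle of points of the unit sphere whose tangent plane passes through `ρ • b 0`, when `b`
is an orthonormal basis and `1 ≤ ρ`, parametrised by the angle. -/
def tangencyCircle (b : Fin 3 → E) (ρ θ : ℝ) : E :=
  ρ⁻¹ • b 0 + (√(ρ ^ 2 - 1) / ρ) • (cos θ • b 1 + sin θ • b 2)

variable {x v : E} {ρ θ : ℝ}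

lemma tangencyKernel_nonneg (x v : E) (θ : ℝ) : 0 ≤ tangencyKernel x v θ := by
  unfold tangencyKernel
  positivity

lemma tangencyKernel_le_one (hx : 1 ≤ ‖x‖) (v : E) (θ : ℝ) : tangencyKernel x v θ ≤ 1 := by
  have hsqrt : √(‖x‖ ^ 2 - 1) ^ 2 = ‖x‖ ^ 2 - 1 := Real.sq_sqrt (by nlinarith)
  have hθ : (√(‖x‖ ^ 2 - 1) * cos θ) ^ 2 ≤ ‖x‖ ^ 2 - 1 := by
    rw [mul_pow, hsqrt]
    exact mul_le_of_le_one_right (by nlinarith) (cos_sq_le_one θ)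
  have hα := sin_sq_add_cos_sq (InnerProductGeometry.angle x v)
  -- Cauchy–Schwarz for `(√(‖x‖² - 1) cos θ, 1)` and `(sin α, cos α)`
  have habs : |√(‖x‖ ^ 2 - 1) * sin (InnerProductGeometry.angle x v) * cos θ +
      cos (InnerProductGeometry.angle x v)| ≤ ‖x‖ := by
    refine abs_le_of_sq_le_sq ?_ (norm_nonneg x)
    nlinarith [sq_nonneg (√(‖x‖ ^ 2 - 1) * cos θ * cos (InnerProductGeometry.angle x v) -
      sin (InnerProductGeometry.angle x v))]
  rw [tangencyKernel, one_div, inv_mul_le_iff₀ (by positivity), mul_one]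
  nlinarith

lemma continuous_tangencyKernel (x v : E) : Continuous (tangencyKernel x v) := by
  unfold tangencyKernel
  fun_prop

lemma periodic_tangencyKernel (x v : E) : Function.Periodic (tangencyKernel x v) (2 * π) := by
  intro θ
  simp [tangencyKernel]

lemma tangencyDensity_nonneg (x v : E) : 0 ≤ tangencyDensity x v :=
  intervalIntegral.integral_nonneg two_pi_pos.le fun θ _ => tangencyKernel_nonneg x v θ

lemma tangencyDensity_le (hx : 1 ≤ ‖x‖) (v : E) : tangencyDensity x v ≤ 2 * π := by
  calc tangencyDensity x v ≤ ∫ _ in (0 : ℝ)..(2 * π), (1 : ℝ) :=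
        intervalIntegral.integral_mono two_pi_pos.le
          ((continuous_tangencyKernel x v).intervalIntegrable _ _) intervalIntegrable_const
          (tangencyKernel_le_one hx v)
    _ = 2 * π := by simp

lemma tangencyDensity_eq_zero (hx : ‖x‖ = 1) (hv : ⟪x, v⟫ = 0) : tangencyDensity x v = 0 := by
  simp [tangencyDensity, tangencyKernel, InnerProductGeometry.cos_angle, hx, hv]

lemma measurable_tangencyDensity [MeasurableSpace E] [BorelSpace E] [SecondCountableTopology E]
    {α : Type*} [MeasurableSpace α] {f g : α → E} (hf : Measurable f) (hg : Measurable g) :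
    Measurable fun t => tangencyDensity (f t) (g t) := by
  have hangle : Measurable fun z : α × ℝ => InnerProductGeometry.angle (f z.1) (g z.1) := by
    unfold InnerProductGeometry.angle
    fun_prop
  have hkernel : Measurable fun z : α × ℝ => tangencyKernel (f z.1) (g z.1) z.2 := by
    simp_rw [tangencyKernel, ← Real.norm_eq_abs]
    fun_prop
  simp_rw [tangencyDensity, intervalIntegral.integral_of_le two_pi_pos.le]
  exact hkernel.stronglyMeasurable.integral_prod_right'.measurable

lemma hasDerivAt_tangencyCircle (b : Fin 3 → E) (ρ θ : ℝ) : HasDerivAt (tangencyCircle b ρ)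
    ((√(ρ ^ 2 - 1) / ρ) • (-sin θ • b 1 + cos θ • b 2)) θ :=
  ((((hasDerivAt_cos θ).smul_const (b 1)).fun_add
    ((hasDerivAt_sin θ).smul_const (b 2))).fun_const_smul (√(ρ ^ 2 - 1) / ρ)).const_add (ρ⁻¹ • b 0)

variable (b : OrthonormalBasis (Fin 3) ℝ E)

lemma exists_inner_eq_mul_cos_and_inner_eq_mul_sin (v : E) : ∃ φ ∈ Ioc (-π) π,
    ⟪b 1, v⟫ = √(‖v‖ ^ 2 - ⟪b 0, v⟫ ^ 2) * cos φ ∧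
      ⟪b 2, v⟫ = √(‖v‖ ^ 2 - ⟪b 0, v⟫ ^ 2) * sin φ := by
  let z : ℂ := ⟨⟪b 1, v⟫, ⟪b 2, v⟫⟩
  have hz : ‖z‖ = √(‖v‖ ^ 2 - ⟪b 0, v⟫ ^ 2) := by
    have hsum := b.sum_sq_norm_inner_right v
    simp only [Fin.sum_univ_three, Real.norm_eq_abs, sq_abs] at hsum
    rw [Complex.norm_def, Complex.normSq_apply, ← hsum]
    congr 1
    ring
  exact ⟨z.arg, Complex.arg_mem_Ioc z, hz ▸ (Complex.norm_mul_cos_arg z).symm,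
    hz ▸ (Complex.norm_mul_sin_arg z).symm⟩

lemma inner_tangencyCircle (v : E) : ⟪v, tangencyCircle b ρ θ⟫ =
    ρ⁻¹ * ⟪b 0, v⟫ + √(ρ ^ 2 - 1) / ρ * (cos θ * ⟪b 1, v⟫ + sin θ * ⟪b 2, v⟫) := by
  simp only [tangencyCircle, inner_add_right, inner_smul_right, real_inner_comm v]

lemma inner_basis_tangencyCircle (i : Fin 3) : ⟪b i, tangencyCircle b ρ θ⟫ =
    ![ρ⁻¹, √(ρ ^ 2 - 1) / ρ * cos θ, √(ρ ^ 2 - 1) / ρ * sin θ] i := by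
  fin_cases i <;> simp [inner_tangencyCircle, b.inner_eq_ite]

lemma norm_tangencyCircle (hρ : 1 ≤ ρ) : ‖tangencyCircle b ρ θ‖ = 1 := by
  have hsum := b.sum_sq_norm_inner_right (tangencyCircle b ρ θ)
  simp only [Fin.sum_univ_three, inner_basis_tangencyCircle, Real.norm_eq_abs, sq_abs] at hsum
  have hsqrt : √(ρ ^ 2 - 1) ^ 2 = ρ ^ 2 - 1 := Real.sq_sqrt (by nlinarith)
  have hone : ‖tangencyCircle b ρ θ‖ ^ 2 = 1 := by
    rw [← hsum]
    calc (ρ⁻¹) ^ 2 + (√(ρ ^ 2 - 1) / ρ * cos θ) ^ 2 + (√(ρ ^ 2 - 1) / ρ * sin θ) ^ 2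
        = (1 + √(ρ ^ 2 - 1) ^ 2 * (sin θ ^ 2 + cos θ ^ 2)) / ρ ^ 2 := by ring
      _ = 1 := by
        rw [sin_sq_add_cos_sq, hsqrt, mul_one, add_sub_cancel, div_self (by positivity)]
  exact (pow_eq_one_iff_of_nonneg (norm_nonneg _) two_ne_zero).1 hone

lemma eq_tangencyCircle_iff {q : E} : q = tangencyCircle b ρ θ ↔ ⟪b 0, q⟫ = ρ⁻¹ ∧
    ⟪b 1, q⟫ = √(ρ ^ 2 - 1) / ρ * cos θ ∧ ⟪b 2, q⟫ = √(ρ ^ 2 - 1) / ρ * sin θ := by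
  refine ⟨?_, fun ⟨h0, h1, h2⟩ => ?_⟩
  · rintro rfl
    exact ⟨inner_basis_tangencyCircle b 0, inner_basis_tangencyCircle b 1,
      inner_basis_tangencyCircle b 2⟩
  · rw [← b.sum_repr' q, Fin.sum_univ_three, h0, h1, h2, tangencyCircle, smul_add, smul_smul,
      smul_smul, add_assoc]

theorem bijOn_tangencyCircle (hρ : 1 < ρ) : BijOn (tangencyCircle b ρ) (Ioc (-π) π)
    {q | ‖q‖ = 1 ∧ ⟪ρ • b 0, q⟫ = 1} := by
  have hρ0 : 0 < ρ := one_pos.trans hρ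
  have hinner : ∀ q : E, ⟪ρ • b 0, q⟫ = 1 ↔ ⟪b 0, q⟫ = ρ⁻¹ := fun q => by
    rw [real_inner_smul_left, mul_comm, mul_eq_one_iff_eq_inv₀ hρ0.ne']
  have hradius : 0 < √(ρ ^ 2 - 1) / ρ := div_pos (Real.sqrt_pos.2 (by nlinarith)) hρ0
  refine ⟨fun θ _ => ⟨norm_tangencyCircle b hρ.le, (hinner _).2 (inner_basis_tangencyCircle b 0)⟩,
    fun θ hθ φ hφ h => ?_, fun q ⟨hq, hqx⟩ => ?_⟩
  · obtain ⟨-, hcos, hsin⟩ := (eq_tangencyCircle_iff b).1 h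
    rw [inner_basis_tangencyCircle] at hcos hsin
    rw [← Complex.arg_cos_add_sin_mul_I hθ, ← Complex.arg_cos_add_sin_mul_I hφ,
      ← Complex.ofReal_cos, ← Complex.ofReal_sin, ← Complex.ofReal_cos, ← Complex.ofReal_sin,
      mul_left_cancel₀ hradius.ne' hcos, mul_left_cancel₀ hradius.ne' hsin]
  · obtain ⟨θ, hθ, hcos, hsin⟩ := exists_inner_eq_mul_cos_and_inner_eq_mul_sin b q
    have hsqrt : √(‖q‖ ^ 2 - ⟪b 0, q⟫ ^ 2) = √(ρ ^ 2 - 1) / ρ := by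
      rw [hq, (hinner q).1 hqx, one_pow, inv_pow, ← one_div, one_sub_div (pow_pos hρ0 2).ne',
        Real.sqrt_div' _ (sq_nonneg ρ), Real.sqrt_sq hρ0.le]
    rw [hsqrt] at hcos hsin
    exact ⟨θ, hθ, ((eq_tangencyCircle_iff b).2 ⟨(hinner q).1 hqx, hcos, hsin⟩).symm⟩

lemma abs_inner_tangencyCircle_div_norm (hx : x ≠ 0) (hb : ‖x‖ • b 0 = x) (v : E) :
    ∃ φ, ∀ θ, |⟪v, tangencyCircle b ‖x‖ θ⟫| / ‖x‖ = ‖v‖ * tangencyKernel x v (θ - φ) := by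
  have hx0 : 0 < ‖x‖ := norm_pos_iff.2 hx
  obtain ⟨φ, -, hcos, hsin⟩ := exists_inner_eq_mul_cos_and_inner_eq_mul_sin b v
  set α := InnerProductGeometry.angle x v with hα
  have hinner : ⟪b 0, v⟫ = ‖v‖ * cos α := by
    have hangle : α = InnerProductGeometry.angle (b 0) v := by
      rw [hα, ← InnerProductGeometry.angle_smul_left_of_pos (b 0) v hx0, hb]
    rw [hangle, ← InnerProductGeometry.cos_angle_mul_norm_mul_norm, b.norm_eq_one, one_mul,
      mul_comm]
  have hsqrt : √(‖v‖ ^ 2 - ⟪b 0, v⟫ ^ 2) = ‖v‖ * sin α := by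
    rw [hinner, ← Real.sqrt_sq (mul_nonneg (norm_nonneg v)
      (InnerProductGeometry.sin_angle_nonneg x v)), ← hα, mul_pow, mul_pow, sin_sq]
    congr 1
    ring
  refine ⟨φ, fun θ => ?_⟩
  have hshift : ⟪v, tangencyCircle b ‖x‖ θ⟫ =
      ‖v‖ / ‖x‖ * (√(‖x‖ ^ 2 - 1) * sin α * cos (θ - φ) + cos α) := by
    rw [inner_tangencyCircle, hcos, hsin, hsqrt, hinner, cos_sub]
    ring
  rw [hshift, abs_mul, abs_of_nonneg (by positivity), tangencyKernel]
  ring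

theorem lintegral_abs_inner_tangencyCircle (hx : x ≠ 0) (hb : ‖x‖ • b 0 = x) (v : E) :
    ∫⁻ θ in Ioc (-π) π, ENNReal.ofReal (|⟪v, tangencyCircle b ‖x‖ θ⟫| / ‖x‖)
      = ENNReal.ofReal (‖v‖ * tangencyDensity x v) := by
  obtain ⟨φ, hφ⟩ := abs_inner_tangencyCircle_div_norm b hx hb v
  have hcont : Continuous fun θ => ‖v‖ * tangencyKernel x v (θ - φ) :=
    ((continuous_tangencyKernel x v).comp (continuous_sub_right φ)).const_mul ‖v‖
  have hperiod : ∫ θ in -π..π, tangencyKernel x v (θ - φ) = tangencyDensity x v := by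
    have h := (periodic_tangencyKernel x v).intervalIntegral_add_eq (-π - φ) 0
    rw [zero_add, show -π - φ + 2 * π = π - φ by ring] at h
    rw [intervalIntegral.integral_comp_sub_right, h, tangencyDensity]
  simp_rw [hφ]
  rw [← ofReal_integral_eq_lintegral_ofReal hcont.integrableOn_Ioc (ae_of_all _ fun θ =>
      mul_nonneg (norm_nonneg v) (tangencyKernel_nonneg x v _)),
    ← intervalIntegral.integral_of_le (neg_le_self pi_pos.le),
    intervalIntegral.integral_const_mul, hperiod]

end TangencyCircle

section TangentFrame

open scoped Matrix

/-- The cross product of `Fin 3 → ℝ`, on Euclidean space. -/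
def cross (x y : E3) : E3 :=
  WithLp.toLp 2 (x.ofLp ⨯₃ y.ofLp)

/-- The right-handed orthonormal frame at `x` whose first vector is radial and whose second vector
is orthogonal to `w`. It degenerates where `x` is parallel to `w`. -/
def tangentFrame (w x : E3) : Fin 3 → E3 :=
  ![‖x‖⁻¹ • x, ‖cross w x‖⁻¹ • cross w x, cross (‖x‖⁻¹ • x) (‖cross w x‖⁻¹ • cross w x)]

variable {w x y : E3}

lemma inner_self_cross (x y : E3) : ⟪x, cross x y⟫ = 0 := by
  rw [EuclideanSpace.inner_eq_star_dotProduct, star_trivial, dotProduct_comm]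
  exact dot_self_cross _ _

lemma inner_cross_self (x y : E3) : ⟪y, cross x y⟫ = 0 := by
  rw [EuclideanSpace.inner_eq_star_dotProduct, star_trivial, dotProduct_comm]
  exact dot_cross_self _ _

lemma norm_cross_of_inner_eq_zero (h : ⟪x, y⟫ = 0) : ‖cross x y‖ = ‖x‖ * ‖y‖ := by
  rw [cross, InnerProductGeometry.norm_ofLp_crossProduct,
    InnerProductGeometry.inner_eq_zero_iff_angle_eq_pi_div_two x y |>.1 h, sin_pi_div_two, mul_one]

lemma ne_zero_of_cross_ne_zero (h : cross w x ≠ 0) : x ≠ 0 := by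
  rintro rfl
  simp [cross] at h

lemma contDiff_cross {n : WithTop ℕ∞} : ContDiff ℝ n fun z : E3 × E3 => cross z.1 z.2 := by
  refine contDiff_euclidean.2 fun i => ?_
  simp only [cross, cross_apply]
  fin_cases i <;> simp only [Fin.zero_eta, Fin.mk_one, Fin.reduceFinMk, Matrix.cons_val] <;>
    fun_prop

lemma cross_single_ne_zero_or (hx : x ≠ 0) :
    cross (EuclideanSpace.single 0 1) x ≠ 0 ∨ cross (EuclideanSpace.single 1 1) x ≠ 0 := by
  contrapose! hx
  have h0 := fun i => congr($(hx.1) i)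
  have h1 := fun i => congr($(hx.2) i)
  ext i
  fin_cases i
  · simpa [cross, cross_apply] using h1 2
  · simpa [cross, cross_apply] using h0 2
  · simpa [cross, cross_apply] using h0 1

lemma orthonormal_cross (hx : ‖x‖ = 1) (hy : ‖y‖ = 1) (hxy : ⟪x, y⟫ = 0) :
    Orthonormal ℝ ![x, y, cross x y] := by
  have hyx : ⟪y, x⟫ = 0 := (real_inner_comm x y).trans hxy
  have hcx : ⟪cross x y, x⟫ = 0 := (real_inner_comm _ _).trans (inner_self_cross x y)
  have hcy : ⟪cross x y, y⟫ = 0 := (real_inner_comm _ _).trans (inner_cross_self x y)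
  have hc : ‖cross x y‖ = 1 := by rw [norm_cross_of_inner_eq_zero hxy, hx, hy, one_mul]
  rw [orthonormal_iff_ite]
  intro i j
  fin_cases i <;> fin_cases j <;>
    simp [hx, hy, hc, hxy, hyx, hcx, hcy, inner_self_cross, inner_cross_self]

lemma exists_orthonormalBasis_eq_tangentFrame (h : cross w x ≠ 0) :
    ∃ b : OrthonormalBasis (Fin 3) ℝ E3, ⇑b = tangentFrame w x := by
  have hb : Orthonormal ℝ (tangentFrame w x) :=
    orthonormal_cross (norm_smul_inv_norm (𝕜 := ℝ) (ne_zero_of_cross_ne_zero h))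
      (norm_smul_inv_norm (𝕜 := ℝ) h)
      (by rw [inner_smul_left, inner_smul_right, inner_cross_self, mul_zero, mul_zero])
  have hcoe := coe_basisOfOrthonormalOfCardEqFinrank hb (by simp)
  exact ⟨Module.Basis.toOrthonormalBasis _ (hcoe.symm ▸ hb),
    (Module.Basis.coe_toOrthonormalBasis _ _).trans hcoe⟩

lemma contDiffAt_tangentFrame {n : WithTop ℕ∞} (h : cross w x ≠ 0) :
    ContDiffAt ℝ n (tangentFrame w) x := by
  have hx : ContDiffAt ℝ n (fun y : E3 => ‖y‖⁻¹ • y) x :=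
    ((contDiffAt_norm ℝ (ne_zero_of_cross_ne_zero h)).inv
      (norm_ne_zero_iff.2 (ne_zero_of_cross_ne_zero h))).smul contDiffAt_id
  have hcross : ContDiffAt ℝ n (cross w) x :=
    (contDiff_cross.comp (contDiff_const.prodMk contDiff_id)).contDiffAt
  have hw : ContDiffAt ℝ n (fun y => ‖cross w y‖⁻¹ • cross w y) x :=
    ((hcross.norm ℝ h).inv (norm_ne_zero_iff.2 h)).smul hcross
  refine contDiffAt_pi.2 fun i => ?_
  fin_cases i
  · exact hx
  · exact hw
  · exact contDiff_cross.contDiffAt.comp x (hx.prodMk hw)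

lemma measurable_tangentFrame (w : E3) : Measurable (tangentFrame w) := by
  have hcross : Measurable fun z : E3 × E3 => cross z.1 z.2 :=
    (contDiff_cross (n := 0)).continuous.measurable
  have hw : Measurable (cross w) := hcross.comp measurable_prodMk_left
  have hx : Measurable fun y : E3 => ‖y‖⁻¹ • y := by fun_prop
  have hw' : Measurable fun y => ‖cross w y‖⁻¹ • cross w y := by fun_prop
  refine measurable_pi_iff.2 fun i => ?_
  fin_cases i
  · exact hx
  · exact hw'
  · exact hcross.comp (hx.prodMk hw')

end TangentFrame

section TangentCone

lemma abs_det_eq_abs_det_inner {ι E : Type*} [Fintype ι] [DecidableEq ι] [NormedAddCommGroup E]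
    [InnerProductSpace ℝ E] (b e : OrthonormalBasis ι ℝ E) (A : E →L[ℝ] E) :
    |A.det| = |(Matrix.of fun i j => ⟪b i, A (e j)⟫).det| := by
  have hA : Matrix.of (fun i j => ⟪b i, A (e j)⟫) =
      b.toBasis.toMatrix e.toBasis * LinearMap.toMatrix e.toBasis e.toBasis A := by
    rw [basis_toMatrix_mul_linearMap_toMatrix]
    ext i j
    simp [LinearMap.toMatrix_apply, b.repr_apply_apply]
  have hdet : |(b.toBasis.toMatrix e.toBasis).det| = 1 := by
    simpa [Module.Basis.det_apply] using b.det_to_matrix_orthonormalBasis e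
  rw [hA, Matrix.det_mul, abs_mul, hdet, one_mul, LinearMap.det_toMatrix]

/-- The half cone with vertex at the origin over the circle of tangency of `x`, parametrised by an
angle and the distance to the origin. The angle is measured in the frame `tangentFrame w x`. -/
def tangentCone (w : E3) (z : E3 × ℝ × ℝ) : E3 :=
  z.2.2 • tangencyCircle (tangentFrame w z.1) ‖z.1‖ z.2.1

/-- The points outside the closed unit ball at which `tangentFrame w` is a frame. -/
def frameDomain (w : E3) : Set E3 :=
  {x | cross w x ≠ 0 ∧ 1 < ‖x‖}

variable {w x : E3} {θ r : ℝ} {z : E3 × ℝ × ℝ}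

lemma isOpen_frameDomain (w : E3) : IsOpen (frameDomain w) := by
  have hcross : Continuous (cross w) :=
    (contDiff_cross (n := 0)).continuous.comp (.prodMk_right w)
  exact (isOpen_ne_fun hcross continuous_const).inter
    (isOpen_lt continuous_const continuous_norm)

lemma contDiffAt_tangentCone (hz : z.1 ∈ frameDomain w) : ContDiffAt ℝ 1 (tangentCone w) z := by
  have hx : z.1 ≠ 0 := norm_pos_iff.1 (one_pos.trans hz.2)
  have hx0 : ‖z.1‖ ≠ 0 := norm_ne_zero_iff.2 hx
  have hnorm : ContDiffAt ℝ 1 (fun z : E3 × ℝ × ℝ => ‖z.1‖) z := contDiffAt_fst.norm ℝ hx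
  have hsqrt : ContDiffAt ℝ 1 (fun z : E3 × ℝ × ℝ => √(‖z.1‖ ^ 2 - 1)) z :=
    ((hnorm.pow 2).sub contDiffAt_const).sqrt (by nlinarith [hz.2])
  have hframe (i : Fin 3) : ContDiffAt ℝ 1 (fun z : E3 × ℝ × ℝ => tangentFrame w z.1 i) z :=
    (contDiffAt_pi.1 (contDiffAt_tangentFrame hz.1) i).comp z contDiffAt_fst
  have := hframe 0
  have := hframe 1
  have := hframe 2
  unfold tangentCone tangencyCircle
  fun_prop (disch := assumption)

lemma exists_orthonormalBasis_of_mem_frameDomain (hx : x ∈ frameDomain w) :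
    ∃ b : OrthonormalBasis (Fin 3) ℝ E3, ⇑b = tangentFrame w x ∧ ‖x‖ • b 0 = x := by
  obtain ⟨b, hb⟩ := exists_orthonormalBasis_eq_tangentFrame hx.1
  refine ⟨b, hb, ?_⟩
  rw [hb]
  exact smul_inv_smul₀ (one_pos.trans hx.2).ne' x

theorem bijOn_tangencyCircle_tangentFrame (hx : x ∈ frameDomain w) :
    BijOn (tangencyCircle (tangentFrame w x) ‖x‖) (Ioc (-π) π) {q | ‖q‖ = 1 ∧ ⟪x, q⟫ = 1} := by
  obtain ⟨b, hb, hbx⟩ := exists_orthonormalBasis_of_mem_frameDomain hx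
  have h := bijOn_tangencyCircle b hx.2
  rwa [hbx, hb] at h

lemma norm_tangentCone (hz : z.1 ∈ frameDomain w) (hr : 0 ≤ z.2.2) :
    ‖tangentCone w z‖ = z.2.2 := by
  obtain ⟨b, hb, -⟩ := exists_orthonormalBasis_of_mem_frameDomain hz
  rw [tangentCone, ← hb, norm_smul, norm_tangencyCircle b hz.2.le, mul_one,
    Real.norm_of_nonneg hr]

lemma inner_tangentCone (hz : z.1 ∈ frameDomain w) : ⟪z.1, tangentCone w z⟫ = z.2.2 := by
  obtain ⟨b, hb, hbz⟩ := exists_orthonormalBasis_of_mem_frameDomain hz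
  have hinner : ⟪z.1, tangencyCircle b ‖z.1‖ z.2.1⟫ = 1 := by
    nth_rw 1 [← hbz]
    rw [real_inner_smul_left, inner_basis_tangencyCircle]
    exact mul_inv_cancel₀ (one_pos.trans hz.2).ne'
  rw [tangentCone, ← hb, inner_smul_right, hinner, mul_one]

lemma inner_fderiv_tangentCone (hz : z.1 ∈ frameDomain w) (u : E3 × ℝ × ℝ) :
    ⟪z.1, fderiv ℝ (tangentCone w) z u⟫ = u.2.2 - ⟪u.1, tangentCone w z⟫ := by
  have hcone := ((contDiffAt_tangentCone hz).differentiableAt one_ne_zero).hasFDerivAt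
  have hinner := (hasFDerivAt_fst (𝕜 := ℝ) (p := z)).inner ℝ hcone
  have hconst : (fun y : E3 × ℝ × ℝ => y.2.2) =ᶠ[nhds z] fun y => ⟪y.1, tangentCone w y⟫ := by
    filter_upwards [continuousAt_fst.preimage_mem_nhds ((isOpen_frameDomain w).mem_nhds hz)]
      with y hy using (inner_tangentCone hy).symm
  have hradius := (hasFDerivAt_snd (𝕜 := ℝ) (p := z)).snd
  have h := congr($((hinner.congr_of_eventuallyEq hconst).unique hradius) u)
  simp only [ContinuousLinearMap.comp_apply, ContinuousLinearMap.prod_apply,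
    ContinuousLinearMap.coe_fst', fderivInnerCLM_apply, ContinuousLinearMap.coe_snd'] at h
  linarith

lemma inner_tangentCone_fderiv_tangentCone (hz : z.1 ∈ frameDomain w) (hr : 0 < z.2.2)
    (u : E3 × ℝ × ℝ) : ⟪tangentCone w z, fderiv ℝ (tangentCone w) z u⟫ = z.2.2 * u.2.2 := by
  have hcone := ((contDiffAt_tangentCone hz).differentiableAt one_ne_zero).hasFDerivAt
  have hconst : (fun y : E3 × ℝ × ℝ => y.2.2 ^ 2) =ᶠ[nhds z] fun y => ‖tangentCone w y‖ ^ 2 := by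
    filter_upwards [continuousAt_fst.preimage_mem_nhds ((isOpen_frameDomain w).mem_nhds hz),
      (continuous_snd.snd.tendsto z).eventually_const_lt hr] with y hy hyr
    rw [norm_tangentCone hy hyr.le]
  have hradius := (hasFDerivAt_snd (𝕜 := ℝ) (p := z)).snd
  have h := congr($((hcone.norm_sq.congr_of_eventuallyEq hconst).unique (hradius.pow 2)) u)
  simp only [smul_apply, ContinuousLinearMap.comp_apply, coe_innerSL_apply, nsmul_eq_mul,
    Nat.cast_ofNat, Nat.add_one_sub_one, pow_one, ContinuousLinearMap.coe_snd', smul_eq_mul] at h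
  linarith

lemma fderiv_tangentCone_angle (hx : x ∈ frameDomain w) :
    fderiv ℝ (tangentCone w) (x, θ, r) (0, 1, 0) =
      r • (√(‖x‖ ^ 2 - 1) / ‖x‖) • (-sin θ • tangentFrame w x 1 + cos θ • tangentFrame w x 2) := by
  have hline : HasDerivAt (fun s : ℝ => (x, s, r)) (0, 1, 0) θ :=
    (hasDerivAt_const θ x).prodMk ((hasDerivAt_id θ).prodMk (hasDerivAt_const θ r))
  have hcone : DifferentiableAt ℝ (tangentCone w) (x, θ, r) :=
    (contDiffAt_tangentCone hx).differentiableAt one_ne_zero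
  have h := hcone.hasFDerivAt.comp_hasDerivAt θ hline
  exact h.unique ((hasDerivAt_tangencyCircle (tangentFrame w x) ‖x‖ θ).fun_const_smul r)

lemma fderiv_tangentCone_radius (hx : x ∈ frameDomain w) :
    fderiv ℝ (tangentCone w) (x, θ, r) (0, 0, 1) = tangencyCircle (tangentFrame w x) ‖x‖ θ := by
  have hline : HasDerivAt (fun s : ℝ => (x, θ, s)) (0, 0, 1) r :=
    (hasDerivAt_const r x).prodMk ((hasDerivAt_const r θ).prodMk (hasDerivAt_id r))
  have hcone : DifferentiableAt ℝ (tangentCone w) (x, θ, r) :=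
    (contDiffAt_tangentCone hx).differentiableAt one_ne_zero
  have h := hcone.hasFDerivAt.comp_hasDerivAt r hline
  simpa using h.unique
    ((hasDerivAt_id r).smul_const (tangencyCircle (tangentFrame w x) ‖x‖ θ))

end TangentCone

section CurveCone

variable {w x v : E3} {θ r : ℝ} {γ : ℝ → E3} {y : E3}

lemma abs_det_eq_of_apply_basis_eq_fderiv_tangentCone (hx : x ∈ frameDomain w) (hr : 0 < r)
    (e : OrthonormalBasis (Fin 3) ℝ E3) (A : E3 →L[ℝ] E3)
    (h0 : A (e 0) = fderiv ℝ (tangentCone w) (x, θ, r) (v, 0, 0))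
    (h1 : A (e 1) = fderiv ℝ (tangentCone w) (x, θ, r) (0, 1, 0))
    (h2 : A (e 2) = fderiv ℝ (tangentCone w) (x, θ, r) (0, 0, 1)) :
    |A.det| = r ^ 2 * (|⟪v, tangencyCircle (tangentFrame w x) ‖x‖ θ⟫| / ‖x‖) := by
  obtain ⟨b, hb, hbx⟩ := exists_orthonormalBasis_of_mem_frameDomain hx
  have hρ : 0 < ‖x‖ := one_pos.trans hx.2
  set κ := √(‖x‖ ^ 2 - 1) / ‖x‖ with hκ
  have hκ_sq : κ ^ 2 + ‖x‖⁻¹ ^ 2 = 1 := by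
    rw [hκ, div_pow, Real.sq_sqrt (by nlinarith [hx.2])]
    field_simp
    ring
  rw [fderiv_tangentCone_angle hx, ← hb] at h1
  rw [fderiv_tangentCone_radius hx, ← hb] at h2
  have hpos : ⟪b 0, A (e 0)⟫ = -(r * (⟪v, tangencyCircle b ‖x‖ θ⟫ / ‖x‖)) := by
    have h : ⟪x, A (e 0)⟫ = 0 - ⟪v, r • tangencyCircle b ‖x‖ θ⟫ := by
      rw [h0, hb]
      exact inner_fderiv_tangentCone (z := (x, θ, r)) hx (v, 0, 0)
    rw [← hbx, real_inner_smul_left, hbx, real_inner_smul_right] at h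
    field_simp
    linarith
  have hperp : ‖x‖⁻¹ * ⟪b 0, A (e 0)⟫ + κ * (cos θ * ⟪b 1, A (e 0)⟫ + sin θ * ⟪b 2, A (e 0)⟫) =
      0 := by
    have h : ⟪r • tangencyCircle b ‖x‖ θ, A (e 0)⟫ = r * 0 := by
      rw [h0, hb]
      exact inner_tangentCone_fderiv_tangentCone (z := (x, θ, r)) hx hr (v, 0, 0)
    rw [real_inner_smul_left, real_inner_comm, inner_tangencyCircle] at h
    linarith [mul_left_cancel₀ hr.ne' h]
  have hangle (i : Fin 3) : ⟪b i, A (e 1)⟫ = r * ![0, -(κ * sin θ), κ * cos θ] i := by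
    fin_cases i <;>
      simp [h1, inner_add_right, inner_neg_right, real_inner_smul_right, b.inner_eq_ite, hκ]
  have hradius (i : Fin 3) : ⟪b i, A (e 2)⟫ = ![‖x‖⁻¹, κ * cos θ, κ * sin θ] i := by
    rw [h2, inner_basis_tangencyCircle]
  have hdet : (Matrix.of fun i j => ⟪b i, A (e j)⟫).det = -(⟪b 0, A (e 0)⟫ * r) := by
    simp only [Matrix.det_fin_three, Matrix.of_apply, hangle, hradius, Matrix.cons_val]
    linear_combination ‖x‖⁻¹ * r * hperp - ⟪b 0, A (e 0)⟫ * r * hκ_sq -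
      ⟪b 0, A (e 0)⟫ * r * κ ^ 2 * sin_sq_add_cos_sq θ
  rw [abs_det_eq_abs_det_inner b e A, hdet, hpos, ← hb, neg_mul, neg_neg, abs_mul, abs_mul, abs_div,
    abs_of_pos hr, abs_of_pos hρ]
  ring

/-- The map sending a parameter of the curve `γ`, an angle and a radius, taken as coordinates in
`E3`, to the point of the half cone `tangentCone` over the circle of tangency. -/
def curveCone (w : E3) (γ : ℝ → E3) (y : E3) : E3 :=
  tangentCone w (γ (y 0), y 1, y 2)

/-- The derivative of `y ↦ (γ (y 0), y 1, y 2)` when `γ` has derivative `v` at `y 0`. -/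
def curveConeCoordDeriv (v : E3) : E3 →L[ℝ] E3 × ℝ × ℝ :=
  (ContinuousLinearMap.toSpanSingleton ℝ v ∘L EuclideanSpace.proj 0).prod
    ((EuclideanSpace.proj 1).prod (EuclideanSpace.proj 2))

lemma hasFDerivAt_curveCone (hγ : DifferentiableAt ℝ γ (y 0)) (hy : γ (y 0) ∈ frameDomain w) :
    HasFDerivAt (curveCone w γ) (fderiv ℝ (tangentCone w) (γ (y 0), y 1, y 2) ∘L
      curveConeCoordDeriv (deriv γ (y 0))) y := by
  have hproj (i : Fin 3) : HasFDerivAt (fun y : E3 => y i) (EuclideanSpace.proj (𝕜 := ℝ) i) y :=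
    PiLp.hasFDerivAt_apply 2 y i
  have hcoord : HasFDerivAt (fun y : E3 => (γ (y 0), y 1, y 2))
      (curveConeCoordDeriv (deriv γ (y 0))) y :=
    (hγ.hasDerivAt.hasFDerivAt.comp y (hproj 0)).prodMk ((hproj 1).prodMk (hproj 2))
  have hcone : DifferentiableAt ℝ (tangentCone w) (γ (y 0), y 1, y 2) :=
    (contDiffAt_tangentCone hy).differentiableAt one_ne_zero
  exact hcone.hasFDerivAt.comp y hcoord

theorem abs_det_fderiv_curveCone (hγ : DifferentiableAt ℝ γ (y 0))
    (hy : γ (y 0) ∈ frameDomain w) (hr : 0 < y 2) :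
    |(fderiv ℝ (curveCone w γ) y).det| = (y 2) ^ 2 * (|⟪deriv γ (y 0),
      tangencyCircle (tangentFrame w (γ (y 0))) ‖γ (y 0)‖ (y 1)⟫| / ‖γ (y 0)‖) := by
  rw [(hasFDerivAt_curveCone hγ hy).fderiv]
  refine abs_det_eq_of_apply_basis_eq_fderiv_tangentCone hy hr (EuclideanSpace.basisFun (Fin 3) ℝ)
    _ ?_ ?_ ?_ <;> simp [curveConeCoordDeriv]

lemma locallyLipschitzOn_curveCone {K : ℝ≥0} (hγ : LipschitzWith K γ) (w : E3) :
    LocallyLipschitzOn {y : E3 | γ (y 0) ∈ frameDomain w} (curveCone w γ) := by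
  intro y hy
  have hproj (i : Fin 3) : LipschitzWith _ (fun y : E3 => y i) :=
    (EuclideanSpace.proj (𝕜 := ℝ) i).lipschitz
  have hcoord := (hγ.comp (hproj 0)).prodMk ((hproj 1).prodMk (hproj 2))
  obtain ⟨C, u, hu, hC⟩ :=
    (contDiffAt_tangentCone (z := (γ (y 0), y 1, y 2)) hy).exists_lipschitzOnWith
  exact ⟨_, _, mem_nhdsWithin_of_mem_nhds (hcoord.continuous.continuousAt.preimage_mem_nhds hu),
    hC.comp hcoord.lipschitzOnWith (mapsTo_preimage _ _)⟩

lemma curveCone_eq_iff {x : E3} (hy : γ (y 0) ∈ frameDomain w) (hr : 0 < y 2) :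
    curveCone w γ y = x ↔ y 2 = ‖x‖ ∧
      tangencyCircle (tangentFrame w (γ (y 0))) ‖γ (y 0)‖ (y 1) = ‖x‖⁻¹ • x := by
  constructor
  · rintro rfl
    have hnorm : ‖curveCone w γ y‖ = y 2 :=
      norm_tangentCone (z := (γ (y 0), y 1, y 2)) hy hr.le
    exact ⟨hnorm.symm, by rw [hnorm, curveCone, tangentCone, inv_smul_smul₀ hr.ne']⟩
  · rintro ⟨hradius, hcircle⟩
    rw [curveCone, tangentCone, hcircle, hradius, smul_inv_smul₀ (hradius ▸ hr.ne')]

end CurveCone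

section CurveBox

variable {A : Set ℝ}

/-- The parameters of the map `curveCone` for the part of the curve over `A`: the angle runs
through a full turn and the radius from the origin to the unit sphere. -/
def curveBox (A : Set ℝ) : Set E3 :=
  {y | y 0 ∈ A ∧ y 1 ∈ Ioc (-π) π ∧ y 2 ∈ Ioo (0 : ℝ) 1}

lemma measurePreserving_coord_triple :
    MeasurePreserving (fun y : E3 => (y 0, y 1, y 2)) volume volume :=
  ((MeasurePreserving.id (volume : Measure ℝ)).prod (volume_preserving_finTwoArrow ℝ)).comp
    ((volume_preserving_piFinSuccAbove (fun _ : Fin 3 => ℝ) 0).comp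
      (EuclideanSpace.volume_preserving_symm_measurableEquiv_toLp (Fin 3)))

lemma volume_setOf_coord_mem_eq_zero (i : Fin 3) (hA : volume A = 0) :
    volume {y : E3 | y i ∈ A} = 0 :=
  ((Measure.quasiMeasurePreserving_eval (fun _ : Fin 3 => (volume : Measure ℝ)) i).comp
    (EuclideanSpace.volume_preserving_symm_measurableEquiv_toLp
      (Fin 3)).quasiMeasurePreserving).preimage_null hA

lemma measurableSet_curveBox (hA : MeasurableSet A) : MeasurableSet (curveBox A) :=
  measurePreserving_coord_triple.measurable (hA.prod (measurableSet_Ioc.prod measurableSet_Ioo))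

lemma setLIntegral_Ioo_ofReal_sq : ∫⁻ r in Ioo (0 : ℝ) 1, ENNReal.ofReal (r ^ 2) = 3⁻¹ := by
  rw [Measure.restrict_congr_set Ioo_ae_eq_Ioc, ← ofReal_integral_eq_lintegral_ofReal
    (intervalIntegral.intervalIntegrable_pow 2).1 (ae_of_all _ fun r => sq_nonneg r),
    ← intervalIntegral.integral_of_le zero_le_one, integral_pow]
  have hvalue : ((1 : ℝ) ^ (2 + 1) - 0 ^ (2 + 1)) / ((2 : ℕ) + 1) = 3⁻¹ := by norm_num
  rw [hvalue, ENNReal.ofReal_inv_of_pos three_pos, ENNReal.ofReal_ofNat]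

lemma setLIntegral_curveBox {G : ℝ → ℝ → ℝ≥0∞} (hG : Measurable (Function.uncurry G))
    (hA : MeasurableSet A) :
    ∫⁻ y in curveBox A, ENNReal.ofReal ((y 2) ^ 2) * G (y 0) (y 1)
      = 3⁻¹ * ∫⁻ t in A, ∫⁻ θ in Ioc (-π) π, G t θ := by
  have hm : Measurable fun z : ℝ × ℝ × ℝ => ENNReal.ofReal (z.2.2 ^ 2) * G z.1 z.2.1 :=
    (measurable_snd.snd.pow_const 2).ennreal_ofReal.mul
      (hG.comp (measurable_fst.prodMk measurable_snd.fst))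
  calc ∫⁻ y in curveBox A, ENNReal.ofReal ((y 2) ^ 2) * G (y 0) (y 1)
      = ∫⁻ z in A ×ˢ Ioc (-π) π ×ˢ Ioo (0 : ℝ) 1, ENNReal.ofReal (z.2.2 ^ 2) * G z.1 z.2.1 :=
        measurePreserving_coord_triple.setLIntegral_comp_preimage
          (hA.prod (measurableSet_Ioc.prod measurableSet_Ioo)) hm
    _ = ∫⁻ t in A, ∫⁻ θ in Ioc (-π) π, ∫⁻ r in Ioo (0 : ℝ) 1,
          ENNReal.ofReal (r ^ 2) * G t θ := by
        rw [Measure.volume_eq_prod, ← Measure.prod_restrict, Measure.volume_eq_prod,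
          ← Measure.prod_restrict, lintegral_prod _ hm.aemeasurable]
        exact lintegral_congr fun t =>
          lintegral_prod _ (hm.comp measurable_prodMk_left).aemeasurable
    _ = ∫⁻ t in A, ∫⁻ θ in Ioc (-π) π, 3⁻¹ * G t θ := by
        refine lintegral_congr fun t => lintegral_congr fun θ => ?_
        rw [lintegral_mul_const _ (by fun_prop), setLIntegral_Ioo_ofReal_sq]
    _ = 3⁻¹ * ∫⁻ t in A, ∫⁻ θ in Ioc (-π) π, G t θ := by
        simp_rw [lintegral_const_mul' (3⁻¹ : ℝ≥0∞) _ (by simp)]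

end CurveBox

section Crofton

variable {γ : ℝ → E3} {w : E3} {A S : Set ℝ} {K : ℝ≥0}

/-- The number of parameters in `A` at which the curve meets the tangent plane of the unit sphere
at `‖x‖⁻¹ • x`. This is the integrand of `horizon`, made homogeneous of degree zero. -/
def tangentCount (γ : ℝ → E3) (A : Set ℝ) (x : E3) : ℝ≥0∞ :=
  {t ∈ A | ⟪γ t, x⟫ = ‖x‖}.encard

/-- The formula for the horizon of the part of the curve `γ` over `A`, integrated in polar
coordinates over the unit ball; the factor `3⁻¹` is the integral of `r ^ 2` over the radii. -/
structure SatisfiesHorizonFormula (γ : ℝ → E3) (A : Set ℝ) : Prop where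
  aemeasurable : AEMeasurable (tangentCount γ A) (volume.restrict (Metric.ball 0 1 \ {0}))
  lintegral_eq : ∫⁻ x in Metric.ball 0 1 \ {0}, tangentCount γ A x =
    3⁻¹ * ∫⁻ t in A, ENNReal.ofReal (‖deriv γ t‖ * tangencyDensity (γ t) (deriv γ t))

lemma tangentCount_smul {r : ℝ} (hr : 0 < r) (x : E3) :
    tangentCount γ A (r • x) = tangentCount γ A x := by
  simp only [tangentCount, real_inner_smul_right, norm_smul, Real.norm_of_nonneg hr.le,
    mul_right_inj' hr.ne']

lemma tangentCount_inter_add_diff (γ : ℝ → E3) (A S : Set ℝ) :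
    tangentCount γ (A ∩ S) + tangentCount γ (A \ S) = tangentCount γ A := by
  ext x
  have hdisj : Disjoint {t ∈ A ∩ S | ⟪γ t, x⟫ = ‖x‖} {t ∈ A \ S | ⟪γ t, x⟫ = ‖x‖} :=
    disjoint_left.2 fun t ht ht' => ht'.1.2 ht.1.2
  rw [Pi.add_apply, tangentCount, tangentCount, ← ENat.toENNReal_add, ← encard_union_eq hdisj,
    tangentCount, ← inter_union_sdiff A S]
  congr 2
  ext t
  by_cases ht : t ∈ S <;> simp [ht]

namespace SatisfiesHorizonFormula

lemma of_inter_of_diff (hS : MeasurableSet S) (hinter : SatisfiesHorizonFormula γ (A ∩ S))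
    (hdiff : SatisfiesHorizonFormula γ (A \ S)) : SatisfiesHorizonFormula γ A where
  aemeasurable :=
    tangentCount_inter_add_diff γ A S ▸ hinter.aemeasurable.add hdiff.aemeasurable
  lintegral_eq := by
    rw [← tangentCount_inter_add_diff γ A S, ← lintegral_inter_add_sdiff _ A hS, mul_add,
      ← hinter.lintegral_eq, ← hdiff.lintegral_eq]
    exact lintegral_add_left' hinter.aemeasurable _

lemma of_volume_eq_zero
    (hcount : volume ({x | ∃ t ∈ A, ⟪γ t, x⟫ = ‖x‖} ∩ (Metric.ball 0 1 \ {0})) = 0)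
    (hint : ∫⁻ t in A, ENNReal.ofReal (‖deriv γ t‖ * tangencyDensity (γ t) (deriv γ t)) = 0) :
    SatisfiesHorizonFormula γ A := by
  have hzero : tangentCount γ A =ᵐ[volume.restrict (Metric.ball 0 1 \ {0})] 0 := by
    have hball : MeasurableSet (Metric.ball (0 : E3) 1 \ {0}) :=
      measurableSet_ball.diff (measurableSet_singleton 0)
    filter_upwards [ae_restrict_of_ae (measure_eq_zero_iff_ae_notMem.1 hcount),
      ae_restrict_mem hball] with x hx hxball
    have hempty : {t ∈ A | ⟪γ t, x⟫ = ‖x‖} = ∅ :=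
      eq_empty_of_forall_notMem fun t ht => hx ⟨⟨t, ht⟩, hxball⟩
    simp [tangentCount, hempty]
  exact ⟨aemeasurable_const.congr hzero.symm, by rw [lintegral_congr_ae hzero, hint]; simp⟩

end SatisfiesHorizonFormula

theorem bijOn_curveBox_inter_curveCone_preimage {x : E3} (hA : MapsTo γ A (frameDomain w))
    (hx : x ∈ Metric.ball (0 : E3) 1 \ {0}) :
    BijOn (fun y : E3 => y 0) (curveBox A ∩ curveCone w γ ⁻¹' {x}) {t ∈ A | ⟪γ t, x⟫ = ‖x‖} := by
  have hx0 : 0 < ‖x‖ := norm_pos_iff.2 hx.2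
  refine ⟨?_, ?_, ?_⟩
  · rintro y ⟨hy, rfl⟩
    have hinner := inner_tangentCone (z := (γ (y 0), y 1, y 2)) (hA hy.1)
    have hnorm := norm_tangentCone (z := (γ (y 0), y 1, y 2)) (hA hy.1) hy.2.2.1.le
    exact ⟨hy.1, hinner.trans hnorm.symm⟩
  · rintro y ⟨hy, hyx⟩ y' ⟨hy', hyx'⟩ (h0 : y 0 = y' 0)
    obtain ⟨hradius, hcircle⟩ := (curveCone_eq_iff (hA hy.1) hy.2.2.1).1 hyx
    obtain ⟨hradius', hcircle'⟩ := (curveCone_eq_iff (hA hy'.1) hy'.2.2.1).1 hyx'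
    rw [← h0] at hcircle'
    have h1 := (bijOn_tangencyCircle_tangentFrame (hA hy.1)).injOn hy.2.1 hy'.2.1
      (hcircle.trans hcircle'.symm)
    ext i
    fin_cases i
    exacts [h0, h1, hradius.trans hradius'.symm]
  · rintro t ⟨ht, htx⟩
    have hmem : ‖x‖⁻¹ • x ∈ {q | ‖q‖ = 1 ∧ ⟪γ t, q⟫ = 1} :=
      ⟨norm_smul_inv_norm hx.2, by rw [real_inner_smul_right, htx, inv_mul_cancel₀ hx0.ne']⟩
    obtain ⟨θ, hθ, hcircle⟩ := (bijOn_tangencyCircle_tangentFrame (hA ht)).surjOn hmem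
    have hx1 : ‖x‖ < 1 := mem_ball_zero_iff.1 hx.1
    refine ⟨!₂[t, θ, ‖x‖], ⟨⟨ht, hθ, hx0, hx1⟩, ?_⟩, rfl⟩
    exact (curveCone_eq_iff (hA ht) hx0).2 ⟨rfl, hcircle⟩

lemma curveCone_mem_of_mem_curveBox {y : E3} (hA : MapsTo γ A (frameDomain w))
    (hy : y ∈ curveBox A) : curveCone w γ y ∈ Metric.ball (0 : E3) 1 \ {0} := by
  have hnorm : ‖curveCone w γ y‖ = y 2 :=
    norm_tangentCone (z := (γ (y 0), y 1, y 2)) (hA hy.1) hy.2.2.1.le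
  exact ⟨mem_ball_zero_iff.2 (hnorm ▸ hy.2.2.2), norm_pos_iff.1 (hnorm ▸ hy.2.2.1)⟩

lemma indicatrix_curveCone (hA : MapsTo γ A (frameDomain w)) :
    indicatrix (curveCone w γ) (curveBox A) =
      (Metric.ball 0 1 \ {0}).indicator (tangentCount γ A) := by
  ext x
  by_cases hx : x ∈ Metric.ball (0 : E3) 1 \ {0}
  · have hbij := bijOn_curveBox_inter_curveCone_preimage hA hx
    rw [indicator_of_mem hx, indicatrix, tangentCount, ← hbij.image_eq, hbij.injOn.encard_image]
  · have hempty : curveBox A ∩ curveCone w γ ⁻¹' {x} = ∅ := by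
      refine eq_empty_of_forall_notMem ?_
      rintro y ⟨hy, rfl⟩
      exact hx (curveCone_mem_of_mem_curveBox hA hy)
    simp [indicator_of_notMem hx, indicatrix, hempty]

lemma measurable_tangencyCircle_tangentFrame (hγ : Measurable γ) (w : E3) :
    Measurable fun z : ℝ × ℝ => tangencyCircle (tangentFrame w (γ z.1)) ‖γ z.1‖ z.2 := by
  have hframe (i : Fin 3) : Measurable fun z : ℝ × ℝ => tangentFrame w (γ z.1) i :=
    (measurable_pi_apply i).comp ((measurable_tangentFrame w).comp (hγ.comp measurable_fst))
  have := hframe 0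
  have := hframe 1
  have := hframe 2
  unfold tangencyCircle
  fun_prop

lemma lintegral_tangencyCircle_tangentFrame {x : E3} (hx : x ∈ frameDomain w) (v : E3) :
    ∫⁻ θ in Ioc (-π) π,
        ENNReal.ofReal (|⟪v, tangencyCircle (tangentFrame w x) ‖x‖ θ⟫| / ‖x‖)
      = ENNReal.ofReal (‖v‖ * tangencyDensity x v) := by
  obtain ⟨b, hb, hbx⟩ := exists_orthonormalBasis_of_mem_frameDomain hx
  rw [← hb]
  exact lintegral_abs_inner_tangencyCircle b (norm_pos_iff.1 (one_pos.trans hx.2)) hbx v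

lemma volume_setOf_tangent_eq_zero (hγ : LipschitzWith K γ) (hmaps : MapsTo γ A (frameDomain w))
    (hA : volume A = 0) : volume ({x | ∃ t ∈ A, ⟪γ t, x⟫ = ‖x‖} ∩ (Metric.ball 0 1 \ {0})) = 0 := by
  have hbox : volume (curveBox A) = 0 :=
    measure_mono_null (fun y hy => hy.1) (volume_setOf_coord_mem_eq_zero 0 hA)
  refine measure_mono_null ?_ (addHaar_image_eq_zero_of_locallyLipschitzOn volume
    ((locallyLipschitzOn_curveCone hγ w).mono fun y (hy : y ∈ curveBox A) => hmaps hy.1) hbox)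
  rintro x ⟨⟨t, ht⟩, hx⟩
  obtain ⟨y, hy, -⟩ := (bijOn_curveBox_inter_curveCone_preimage hmaps hx).surjOn ht
  exact ⟨y, hy⟩

lemma volume_cone_range_eq_zero (hγ : LipschitzWith K γ) :
    volume {x : E3 | ∃ r : ℝ, ∃ t, x = r • γ t} = 0 := by
  have hproj (i : Fin 3) : LocallyLipschitz (fun y : E3 => y i) :=
    (EuclideanSpace.proj (𝕜 := ℝ) i).lipschitz.locallyLipschitz
  have hsmul : ContDiff ℝ 1 fun z : ℝ × E3 => z.1 • z.2 := contDiff_fst.smul contDiff_snd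
  have hcone := hsmul.locallyLipschitz.comp
    ((hproj 2).prodMk (hγ.locallyLipschitz.comp (hproj 0)))
  refine measure_mono_null ?_ (addHaar_image_eq_zero_of_locallyLipschitzOn volume
    hcone.locallyLipschitzOn (volume_setOf_coord_mem_eq_zero 1 (measure_singleton (0 : ℝ))))
  rintro x ⟨r, t, rfl⟩
  exact ⟨!₂[t, 0, r], by simp, by simp⟩

lemma inner_deriv_eq_zero_of_isLocalMin_norm {E : Type*} [NormedAddCommGroup E]
    [InnerProductSpace ℝ E] {γ : ℝ → E} {t : ℝ} (hmin : IsLocalMin (fun s => ‖γ s‖) t)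
    (hγ : DifferentiableAt ℝ γ t) : ⟪γ t, deriv γ t⟫ = 0 := by
  have hmin_sq : IsLocalMin (fun s => ‖γ s‖ ^ 2) t :=
    hmin.mono fun s hs => pow_le_pow_left₀ (norm_nonneg _) hs 2
  linarith [hmin_sq.hasDerivAt_eq_zero hγ.hasDerivAt.norm_sq]

namespace SatisfiesHorizonFormula

lemma of_differentiableAt (hγ : Measurable γ) (hA : MeasurableSet A)
    (hmaps : MapsTo γ A (frameDomain w)) (hdiff : ∀ t ∈ A, DifferentiableAt ℝ γ t) :
    SatisfiesHorizonFormula γ A := by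
  have hball : MeasurableSet (Metric.ball (0 : E3) 1 \ {0}) :=
    measurableSet_ball.diff (measurableSet_singleton 0)
  obtain ⟨hmeas, hint⟩ := area_formula volume (measurableSet_curveBox hA) fun y hy =>
    have hderiv := hasFDerivAt_curveCone (hdiff _ hy.1) (hmaps hy.1)
    hderiv.differentiableAt.hasFDerivAt.hasFDerivWithinAt
  rw [indicatrix_curveCone hmaps] at hmeas hint
  refine ⟨(aemeasurable_indicator_iff hball).1 hmeas, ?_⟩
  set G : ℝ → ℝ → ℝ≥0∞ := fun t θ =>
    ENNReal.ofReal (|⟪deriv γ t, tangencyCircle (tangentFrame w (γ t)) ‖γ t‖ θ⟫| / ‖γ t‖) with hG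
  have hG_meas : Measurable (Function.uncurry G) := by
    have hinner := ((measurable_deriv γ).comp measurable_fst).inner (𝕜 := ℝ)
      (measurable_tangencyCircle_tangentFrame hγ w)
    exact (hinner.norm.div (hγ.comp measurable_fst).norm).ennreal_ofReal
  calc ∫⁻ x in Metric.ball 0 1 \ {0}, tangentCount γ A x
      = ∫⁻ y in curveBox A, ENNReal.ofReal |(fderiv ℝ (curveCone w γ) y).det| := by
        rw [← hint, lintegral_indicator hball]
    _ = ∫⁻ y in curveBox A, ENNReal.ofReal ((y 2) ^ 2) * G (y 0) (y 1) := by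
        refine setLIntegral_congr_fun (measurableSet_curveBox hA) fun y hy => ?_
        simp only [abs_det_fderiv_curveCone (hdiff _ hy.1) (hmaps hy.1) hy.2.2.1,
          ENNReal.ofReal_mul (sq_nonneg (y 2)), hG]
    _ = 3⁻¹ * ∫⁻ t in A, ∫⁻ θ in Ioc (-π) π, G t θ := setLIntegral_curveBox hG_meas hA
    _ = 3⁻¹ * ∫⁻ t in A, ENNReal.ofReal (‖deriv γ t‖ * tangencyDensity (γ t) (deriv γ t)) := by
        rw [setLIntegral_congr_fun hA fun t ht =>
          lintegral_tangencyCircle_tangentFrame (hmaps ht) (deriv γ t)]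

lemma of_mapsTo_frameDomain (hγ : LipschitzWith K γ) (hA : MeasurableSet A)
    (hmaps : MapsTo γ A (frameDomain w)) : SatisfiesHorizonFormula γ A := by
  have hdiff : MeasurableSet {t | DifferentiableAt ℝ γ t} := measurableSet_of_differentiableAt ℝ γ
  have hnull : volume (A \ {t | DifferentiableAt ℝ γ t}) = 0 :=
    measure_mono_null (fun t ht => ht.2) (ae_iff.1 hγ.ae_differentiableAt)
  refine of_inter_of_diff hdiff ?_ ?_
  · exact of_differentiableAt hγ.continuous.measurable (hA.inter hdiff)
      (hmaps.mono_left inter_subset_left) fun t ht => ht.2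
  · exact of_volume_eq_zero
      (volume_setOf_tangent_eq_zero hγ (hmaps.mono_left sdiff_subset) hnull)
      (setLIntegral_measure_zero _ _ hnull)

lemma of_norm_eq_one (hγ : LipschitzWith K γ) (hout : ∀ t, 1 ≤ ‖γ t‖) (hA : MeasurableSet A)
    (hone : ∀ t ∈ A, ‖γ t‖ = 1) : SatisfiesHorizonFormula γ A := by
  refine of_volume_eq_zero (measure_mono_null ?_ (volume_cone_range_eq_zero hγ)) ?_
  · rintro x ⟨⟨t, ht, htx⟩, -⟩
    have h := inner_eq_norm_mul_iff_real.1 (htx.trans (by rw [hone t ht, one_mul]))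
    exact ⟨‖x‖, t, by rw [h, hone t ht, one_smul]⟩
  · rw [setLIntegral_congr_fun_ae (g := 0) hA, Pi.zero_def, lintegral_zero]
    filter_upwards [hγ.ae_differentiableAt] with t hdiff ht
    have hmin : IsLocalMin (fun s => ‖γ s‖) t :=
      Filter.Eventually.of_forall fun s => (hone t ht).trans_le (hout s)
    rw [tangencyDensity_eq_zero (hone t ht) (inner_deriv_eq_zero_of_isLocalMin_norm hmin hdiff),
      mul_zero, ENNReal.ofReal_zero, Pi.zero_apply]

theorem of_lipschitzWith (hγ : LipschitzWith K γ) (hout : ∀ t, 1 ≤ ‖γ t‖)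
    (hA : MeasurableSet A) : SatisfiesHorizonFormula γ A := by
  have hframe (w : E3) : MeasurableSet (γ ⁻¹' frameDomain w) :=
    (isOpen_frameDomain w).measurableSet.preimage hγ.continuous.measurable
  refine of_inter_of_diff (hframe (EuclideanSpace.single 0 1))
    (of_mapsTo_frameDomain hγ (hA.inter (hframe _)) fun t ht => ht.2) ?_
  refine of_inter_of_diff (hframe (EuclideanSpace.single 1 1))
    (of_mapsTo_frameDomain hγ ((hA.diff (hframe _)).inter (hframe _)) fun t ht => ht.2) ?_
  refine of_norm_eq_one hγ hout ((hA.diff (hframe _)).diff (hframe _)) fun t ht => ?_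
  by_contra hne
  have hlt : 1 < ‖γ t‖ := (hout t).lt_of_ne' hne
  rcases cross_single_ne_zero_or (norm_pos_iff.1 (one_pos.trans hlt)) with h | h
  · exact ht.1.2 ⟨h, hlt⟩
  · exact ht.2 ⟨h, hlt⟩

end SatisfiesHorizonFormula

end Crofton

section Horizon

variable {γ g : ℝ → E3} {K : ℝ≥0} {a b : ℝ}

lemma horizon_congr (h : EqOn γ g (Icc a b)) : horizon a b γ = horizon a b g := by
  have hset (p : E3) : {t ∈ Ico a b | ⟪γ t, p⟫ = 1} = {t ∈ Ico a b | ⟪g t, p⟫ = 1} :=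
    sep_ext_iff.2 fun t ht => by rw [h (Ico_subset_Icc_self ht)]
  simp only [horizon, hset]

lemma horizon_eq_lintegral_tangentCount (a b : ℝ) (γ : ℝ → E3) :
    horizon a b γ = ∫⁻ p : Metric.sphere (0 : E3) 1,
      tangentCount γ (Ico a b) p ∂(volume : Measure E3).toSphere := by
  simp only [horizon, tangentCount, norm_eq_of_mem_sphere]

lemma SatisfiesHorizonFormula.horizon_eq (hγ : SatisfiesHorizonFormula γ (Ico a b)) :
    horizon a b γ =
      ∫⁻ t in Ioo a b, ENNReal.ofReal (‖deriv γ t‖ * tangencyDensity (γ t) (deriv γ t)) := by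
  rw [horizon_eq_lintegral_tangentCount, lintegral_toSphere_eq_finrank_mul volume
    (fun r hr x => tangentCount_smul hr x) hγ.aemeasurable, hγ.lintegral_eq, ← mul_assoc,
    finrank_euclideanSpace_fin, Nat.cast_ofNat,
    ENNReal.mul_inv_cancel three_ne_zero ENNReal.ofNat_ne_top, one_mul,
    Measure.restrict_congr_set Ioo_ae_eq_Ico]

lemma integrableOn_norm_deriv_mul_tangencyDensity (hγ : LipschitzWith K γ)
    (hout : ∀ t, 1 ≤ ‖γ t‖) :
    IntegrableOn (fun t => ‖deriv γ t‖ * tangencyDensity (γ t) (deriv γ t)) (Ioo a b) := by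
  have hmeas := (measurable_deriv γ).norm.mul
    (measurable_tangencyDensity hγ.continuous.measurable (measurable_deriv γ))
  refine Measure.integrableOn_of_bounded (M := K * (2 * π)) measure_Ioo_lt_top.ne
    hmeas.aestronglyMeasurable (ae_of_all _ fun t => ?_)
  rw [norm_mul, norm_norm, Real.norm_of_nonneg (tangencyDensity_nonneg _ _)]
  exact mul_le_mul (norm_deriv_le_of_lipschitz hγ) (tangencyDensity_le (hout t) _)
    (tangencyDensity_nonneg _ _) K.coe_nonneg

theorem horizon_eq_integral_norm_derivWithin_mul_tangencyDensity (hab : a ≤ b)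
    (hγ : LipschitzOnWith K γ (Icc a b)) (hout : ∀ t ∈ Icc a b, 1 ≤ ‖γ t‖) :
    horizon a b γ = ENNReal.ofReal (∫ t in a..b,
      ‖derivWithin γ (Icc a b) t‖ * tangencyDensity (γ t) (derivWithin γ (Icc a b) t)) := by
  obtain ⟨g, hg, hγg, hrange⟩ := exists_lipschitzWith_eqOn_Icc hab hγ
  have hgout (t : ℝ) : 1 ≤ ‖g t‖ := by
    obtain ⟨s, hs, hst⟩ := hrange (mem_range_self t)
    exact hst ▸ hout s hs
  have hderiv : EqOn
      (fun t => ‖derivWithin γ (Icc a b) t‖ * tangencyDensity (γ t) (derivWithin γ (Icc a b) t))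
      (fun t => ‖deriv g t‖ * tangencyDensity (g t) (deriv g t)) (Ioo a b) := fun t ht => by
    simp only [derivWithin_Icc_eq_deriv_of_eqOn hγg ht, hγg (Ioo_subset_Icc_self ht)]
  rw [horizon_congr hγg, (SatisfiesHorizonFormula.of_lipschitzWith hg hgout
      measurableSet_Ico).horizon_eq, intervalIntegral.integral_of_le hab,
    integral_Ioc_eq_integral_Ioo, setIntegral_congr_fun measurableSet_Ioo hderiv,
    ofReal_integral_eq_lintegral_ofReal (integrableOn_norm_deriv_mul_tangencyDensity hg hgout)
      (ae_of_all _ fun t => mul_nonneg (norm_nonneg _) (tangencyDensity_nonneg _ _))]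

theorem horizon_eq_mul_integral_tangencyDensity {C : ℝ≥0} (hab : a ≤ b)
    (hγ : HasConstantSpeedOnWith γ (Icc a b) C) (hout : ∀ t ∈ Icc a b, 1 ≤ ‖γ t‖) :
    horizon a b γ = ENNReal.ofReal
      (C * ∫ t in a..b, tangencyDensity (γ t) (derivWithin γ (Icc a b) t)) := by
  rw [horizon_eq_integral_norm_derivWithin_mul_tangencyDensity hab
      (lipschitzOnWith_of_hasConstantSpeedOnWith hγ) hout, ← intervalIntegral.integral_const_mul,
    intervalIntegral.integral_of_le hab, intervalIntegral.integral_of_le hab,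
    integral_Ioc_eq_integral_Ioo, integral_Ioc_eq_integral_Ioo]
  congr 1
  refine integral_congr_ae ?_
  filter_upwards [ae_norm_derivWithin_eq_of_hasConstantSpeedOnWith hγ hab] with t ht
  rw [ht]

end Horizon

/-- **Integral formula for the horizon/efficiency** of a constant speed curve lying
outside the unit sphere. -/
theorem horizon_eq_integral
    (a b : ℝ) (hab : a < b) (γ : ℝ → E3) (C : ℝ≥0) (hC : 0 < C)
    (hcont : ContinuousOn γ (Set.Icc a b))
    (hspeed : HasConstantSpeedOnWith γ (Set.Icc a b) C)
    (hout : ∀ t ∈ Set.Icc a b, 1 ≤ ‖γ t‖) :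
    horizon a b γ = ENNReal.ofReal ((C : ℝ) *
        ∫ t in a..b, ∫ θ in (0:ℝ)..(2 * π),
          (1 / ‖γ t‖ ^ 2) *
            |Real.sqrt (‖γ t‖ ^ 2 - 1) * Real.sin (alpha a b γ t) * Real.cos θ +
              Real.cos (alpha a b γ t)|) ∧
    (horizon a b γ).toReal / (eVariationOn γ (Set.Icc a b)).toReal =
      (1 / (b - a)) *
        ∫ t in a..b, ∫ θ in (0:ℝ)..(2 * π),
          (1 / ‖γ t‖ ^ 2) *
            |Real.sqrt (‖γ t‖ ^ 2 - 1) * Real.sin (alpha a b γ t) * Real.cos θ +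
              Real.cos (alpha a b γ t)| := by
  change horizon a b γ = ENNReal.ofReal
      (C * ∫ t in a..b, tangencyDensity (γ t) (derivWithin γ (Icc a b) t)) ∧
    (horizon a b γ).toReal / (eVariationOn γ (Icc a b)).toReal =
      (1 / (b - a)) * ∫ t in a..b, tangencyDensity (γ t) (derivWithin γ (Icc a b) t)
  have hhorizon := horizon_eq_mul_integral_tangencyDensity hab.le hspeed hout
  have hdensity : 0 ≤ ∫ t in a..b, tangencyDensity (γ t) (derivWithin γ (Icc a b) t) :=
    intervalIntegral.integral_nonneg hab.le fun t _ => tangencyDensity_nonneg _ _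
  have hC0 : (C : ℝ) ≠ 0 := NNReal.coe_ne_zero.2 hC.ne'
  have hba : 0 < b - a := sub_pos.2 hab
  refine ⟨hhorizon, ?_⟩
  rw [hhorizon, eVariationOn_Icc_of_hasConstantSpeedOnWith hspeed hab.le,
    ENNReal.toReal_ofReal (by positivity), ENNReal.toReal_ofReal (by positivity)]
  field_simp
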